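/- Let 𝓓 = (Ω, 𝓑) be a β(i) design with parameter (v, k, d), set c = k−d, and assume k−d ≥ i+1 and that v does not achieve the lower bound (d+2i)·(k−d)/i, i.e. i·v > (d+2i)·(k−d). Then h(v−k, d, c, i) ≥ 0. Moreover, h(v−k, d, c, i) = 0 holds if and only if the number |{B ∈ 𝓑 : |X ∩ B| = d+i+1}| is the same for every X ∈ S₂. -/

import Mathlib

open Finset

variable {α : Type*} [Fintype α] [DecidableEq α]

/-- `𝓑` is a design on the finite type `α` of cardinality `v`, with block size `k` and
maximal pairwise block intersection size `d`. -/
def IsDesign (𝓑 : Finset (Finset α)) (v k d : ℕ) : Prop :=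
  Fintype.card α = v ∧ 2 ≤ 𝓑.card ∧ d < k ∧ k < v ∧
  (∀ B ∈ 𝓑, B.card = k) ∧
  (∀ B ∈ 𝓑, ∀ C ∈ 𝓑, B ≠ C → (B ∩ C).card ≤ d) ∧
  (∃ B ∈ 𝓑, ∃ C ∈ 𝓑, B ≠ C ∧ (B ∩ C).card = d)

/-- `𝓑` is a `β(i)` design with parameters `(v, k, d)`: a design such that
`1 ≤ i ≤ (v - d + 1)/2` and every `(d + 2i - 1)`-element subset `X` of `Ω` admits a
unique block `B` with `|X ∩ B| ≥ d + i`. -/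
def IsBetaDesign (𝓑 : Finset (Finset α)) (v k d i : ℕ) : Prop :=
  IsDesign 𝓑 v k d ∧ 1 ≤ i ∧ 2 * i ≤ v - d + 1 ∧
  ∀ X : Finset α, X.card = d + 2 * i - 1 →
    ∃! B, B ∈ 𝓑 ∧ d + i ≤ (X ∩ B).card

/-- The family `S₂` of all `(d + 2(i+1))`-element subsets `X` of `Ω` such that
`|X ∩ B| ≤ d + i + 1` for every block `B ∈ 𝓑`. -/
def S2 (𝓑 : Finset (Finset α)) (d i : ℕ) : Finset (Finset α) :=
  (Finset.univ : Finset (Finset α)).filter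
    (fun X => X.card = d + 2 * (i + 1) ∧ ∀ B ∈ 𝓑, (X ∩ B).card ≤ d + i + 1)

/-- The polynomial `h(x, d, c, i)` of Proposition 7. -/
noncomputable def hPoly (x d c i : ℝ) : ℝ :=
  i * (i + 1) * x ^ 2 - i * (2 * (c - i) * d + 2 * i * c + 3 * i + 1) * x
    + (c - i) * (c - i - 1) * d ^ 2
    + (c - i) * ((2 * i + 1) * c - 3 * i - 1) * d
    + i * (i + 1) * c ^ 2 - i * (3 * i + 1) * c + 2 * i ^ 2 * (2 * i + 1)

/-!
Let `m X` be the number of blocks missing exactly `i + 1` points of `X ∈ S₂`. Cauchy–Schwarz gives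
`(∑ m X)² ≤ |S₂| ∑ (m X)²`, with equality exactly when `m` is constant, and the difference of the
two sides turns out to be a positive multiple of `h`.

Two distinct blocks `B`, `C` that each miss `r` points of a set `X` of `d + 2r` points satisfy
`|B ∩ C| = d` and `B ∩ C ⊆ X ⊆ B ∪ C`, because `|B ∩ C| ≤ d`. Hence, apart from binomial
coefficients, the second moment of `m` involves only the number `N` of pairs of blocks meeting in
`d` points. The same count one level lower, over sets of `d + 2i` points, gives `N`: removing a
point from such a set and applying the defining property of a `β(i)` design shows that exactly
`(d + 2i) / i` blocks miss `i` of its points, provided that no block misses fewer. Finally `|S₂|` is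
found by adding points one at a time. The sets met half way, of size `d + 2i + 1`, number a positive
multiple of `i v - (d + 2i)(k - d)`, and this factor is also the one that makes the variance of `m`
a positive multiple of `h`.
-/

section SetCounting

omit [Fintype α] in
lemma card_sdiff_add_card_sdiff_add_card_inter (X B C : Finset α) :
    #(X \ B) + #(X \ C) + #(B ∩ C) = #X + #(X \ (B ∪ C)) + #((B ∩ C) \ X) := by
  have hXBC := card_union_add_card_inter (X \ B) (X \ C)
  rw [← sdiff_inter_distrib_right, ← sdiff_union_distrib] at hXBC
  have hleft := card_sdiff_add_card X (B ∩ C)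
  have hright := card_sdiff_add_card (B ∩ C) X
  rw [union_comm] at hright
  omega

omit [Fintype α] in
lemma card_filter_Icc_card_inter {D P Q : Finset α} (hDP : Disjoint D P) (hDQ : Disjoint D Q)
    (hPQ : Disjoint P Q) (p q : ℕ) :
    #{X ∈ Icc D (D ∪ P ∪ Q) | #(X ∩ P) = p ∧ #(X ∩ Q) = q} = (#P).choose p * (#Q).choose q := by
  rw [← card_powersetCard, ← card_powersetCard, ← card_product]
  have inter_eq {Y Z : Finset α} (hY : Y ⊆ P) (hZ : Z ⊆ Q) :
      (D ∪ Y ∪ Z) ∩ P = Y ∧ (D ∪ Y ∪ Z) ∩ Q = Z := by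
    grind [disjoint_left]
  refine card_nbij' (fun X => (X ∩ P, X ∩ Q)) (fun Y => D ∪ Y.1 ∪ Y.2) ?_ ?_ ?_ ?_
  · intro X hX
    grind
  · rintro ⟨Y, Z⟩ hYZ
    obtain ⟨⟨hY, rfl⟩, hZ, rfl⟩ : (Y ⊆ P ∧ #Y = p) ∧ Z ⊆ Q ∧ #Z = q := by simpa using hYZ
    grind
  · intro X hX
    grind
  · rintro ⟨Y, Z⟩ hYZ
    obtain ⟨⟨hY, -⟩, hZ, -⟩ : (Y ⊆ P ∧ #Y = p) ∧ Z ⊆ Q ∧ #Z = q := by simpa using hYZ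
    exact Prod.ext (inter_eq hY hZ).1 (inter_eq hY hZ).2

lemma card_filter_card_inter_card_sdiff (B : Finset α) (p r : ℕ) :
    #{X : Finset α | #(X ∩ B) = p ∧ #(X \ B) = r} = (#B).choose p * (#Bᶜ).choose r := by
  rw [← card_filter_Icc_card_inter (disjoint_empty_left B) (disjoint_empty_left Bᶜ)
    disjoint_compl_right]
  congr 1
  ext X
  simp [sdiff_eq_inter_compl]

lemma card_filter_card_sdiff_card_sdiff (B C : Finset α) (r s : ℕ) :
    #{X : Finset α | #X = #(B ∩ C) + r + s ∧ #(X \ C) = r ∧ #(X \ B) = s} =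
      (#(B \ C)).choose r * (#(C \ B)).choose s := by
  rw [← card_filter_Icc_card_inter (D := B ∩ C) (by grind [disjoint_left])
    (by grind [disjoint_left]) (by grind [disjoint_left])]
  congr 1
  ext X
  have hcard := card_sdiff_add_card_sdiff_add_card_inter X B C
  simp only [mem_filter, mem_univ, true_and, mem_Icc]
  have hunion : B ∩ C ∪ B \ C ∪ C \ B = B ∪ C := by grind
  have inter_eq (hX : X ⊆ B ∪ C) : X ∩ (B \ C) = X \ C ∧ X ∩ (C \ B) = X \ B := by grind
  rw [hunion]
  constructor
  · rintro ⟨hX, hr, hs⟩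
    have hsub : X ⊆ B ∪ C := by rw [← sdiff_eq_empty_iff_subset, ← card_eq_zero]; omega
    have hsup : B ∩ C ⊆ X := by rw [← sdiff_eq_empty_iff_subset, ← card_eq_zero]; omega
    rw [(inter_eq hsub).1, (inter_eq hsub).2]
    exact ⟨⟨hsup, hsub⟩, hr, hs⟩
  · rintro ⟨⟨hsup, hsub⟩, hr, hs⟩
    rw [(inter_eq hsub).1] at hr
    rw [(inter_eq hsub).2] at hs
    rw [sdiff_eq_empty_iff_subset.mpr hsub, sdiff_eq_empty_iff_subset.mpr hsup] at hcard
    simp only [card_empty] at hcard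
    omega

end SetCounting

section Variance

variable {ι R : Type*} [CommRing R]

lemma sum_sum_sub_sq (s : Finset ι) (f : ι → R) :
    ∑ x ∈ s, ∑ y ∈ s, (f x - f y) ^ 2 = 2 * (#s * ∑ x ∈ s, f x ^ 2 - (∑ x ∈ s, f x) ^ 2) := by
  simp only [sub_sq, sum_add_distrib, sum_sub_distrib, sum_const, nsmul_eq_mul, ← mul_sum,
    ← sum_mul]
  ring

lemma card_mul_sum_sq_eq_sq_sum_iff [LinearOrder R] [IsStrictOrderedRing R]
    (s : Finset ι) (f : ι → R) :
    #s * ∑ x ∈ s, f x ^ 2 = (∑ x ∈ s, f x) ^ 2 ↔ ∀ x ∈ s, ∀ y ∈ s, f x = f y := by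
  have hnonneg (x : ι) : 0 ≤ ∑ y ∈ s, (f x - f y) ^ 2 := sum_nonneg fun y _ => sq_nonneg _
  calc _ ↔ ∑ x ∈ s, ∑ y ∈ s, (f x - f y) ^ 2 = 0 := by
        rw [sum_sum_sub_sq, mul_eq_zero_iff_left two_ne_zero, sub_eq_zero]
    _ ↔ _ := by
        simp only [sum_eq_zero_iff_of_nonneg fun x _ => hnonneg x,
          sum_eq_zero_iff_of_nonneg fun _ _ => sq_nonneg _, sq_eq_zero_iff, sub_eq_zero]

end Variance

section FarSets

/-- The `n`-subsets having at least `r` points outside every member of `𝓑`. For `n = d + 2r`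
the condition reads `#(X ∩ B) ≤ d + r`, so that the sets `S₂` of a `β(i)` design are
`farSets 𝓑 (d + 2 * (i + 1)) (i + 1)`. -/
def farSets (𝓑 : Finset (Finset α)) (n r : ℕ) : Finset (Finset α) :=
  {X ∈ powersetCard n univ | ∀ B ∈ 𝓑, r ≤ #(X \ B)}

/-- The number of members of `𝓑` missing exactly `r` points of `X`. -/
def missCount (𝓑 : Finset (Finset α)) (r : ℕ) (X : Finset α) : ℕ :=
  #{B ∈ 𝓑 | #(X \ B) = r}

/-- The number of pairs `(X, B)` with `B ∈ 𝓑` such that `X` has `p` points inside `B` and `r`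
points outside `B`. It is the first moment of `missCount 𝓑 r` over `farSets 𝓑 (p + r) r`. -/
def flagCount (𝓑 : Finset (Finset α)) (p r : ℕ) : ℕ :=
  ∑ B ∈ 𝓑, #{X : Finset α | #(X ∩ B) = p ∧ #(X \ B) = r}

/-- The ordered pairs of distinct members of `𝓑` with exactly `d` common points, which determine the
second moment of `missCount`. -/
def meetingPairs (𝓑 : Finset (Finset α)) (d : ℕ) : Finset (Finset α × Finset α) :=
  {P ∈ 𝓑.offDiag | #(P.1 ∩ P.2) = d}

variable {𝓑 : Finset (Finset α)} {X B : Finset α} {k d n p r : ℕ}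

lemma mem_farSets : X ∈ farSets 𝓑 n r ↔ #X = n ∧ ∀ B ∈ 𝓑, r ≤ #(X \ B) := by
  simp [farSets]

lemma mem_farSets_of_card_sdiff_eq (hd : (𝓑 : Set (Finset α)).Pairwise fun B C => #(B ∩ C) ≤ d)
    (hX : d + 2 * r ≤ #X) (hB : B ∈ 𝓑) (hXB : #(X \ B) = r) : X ∈ farSets 𝓑 #X r := by
  refine mem_farSets.mpr ⟨rfl, fun C hC => ?_⟩
  rcases eq_or_ne B C with rfl | hBC
  · exact hXB.ge
  · have := card_sdiff_add_card_sdiff_add_card_inter X B C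
    have := hd hB hC hBC
    omega

lemma filter_farSets_card_sdiff_eq
    (hd : (𝓑 : Set (Finset α)).Pairwise fun B C => #(B ∩ C) ≤ d) (hpr : d + r ≤ p) (hB : B ∈ 𝓑) :
    {X ∈ farSets 𝓑 (p + r) r | #(X \ B) = r} =
      ({X | #(X ∩ B) = p ∧ #(X \ B) = r} : Finset (Finset α)) := by
  ext X
  have hcard := card_sdiff_add_card_inter X B
  simp only [mem_filter, mem_univ, true_and]
  constructor
  · rintro ⟨hX, hXB⟩
    have := (mem_farSets.mp hX).1
    omega
  · rintro ⟨hp, hXB⟩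
    have hX : #X = p + r := by omega
    exact ⟨hX ▸ mem_farSets_of_card_sdiff_eq hd (by omega) hB hXB, hXB⟩

lemma sum_missCount_farSets (hd : (𝓑 : Set (Finset α)).Pairwise fun B C => #(B ∩ C) ≤ d)
    (hpr : d + r ≤ p) : ∑ X ∈ farSets 𝓑 (p + r) r, missCount 𝓑 r X = flagCount 𝓑 p r :=
  calc ∑ X ∈ farSets 𝓑 (p + r) r, missCount 𝓑 r X
      = ∑ B ∈ 𝓑, #{X ∈ farSets 𝓑 (p + r) r | #(X \ B) = r} :=
        sum_card_bipartiteAbove_eq_sum_card_bipartiteBelow fun X B => #(X \ B) = r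
    _ = flagCount 𝓑 p r :=
        sum_congr rfl fun B hB => by rw [filter_farSets_card_sdiff_eq hd hpr hB]

omit [Fintype α] in
lemma pairwiseDisjoint_sdiff (hd : (𝓑 : Set (Finset α)).Pairwise fun B C => #(B ∩ C) ≤ d)
    (hX : d + 2 * r ≤ #X) :
    {B | B ∈ 𝓑 ∧ #(X \ B) = r}.PairwiseDisjoint fun B => X \ B := by
  rintro B ⟨hB, hXB⟩ C ⟨hC, hXC⟩ hBC
  have := card_sdiff_add_card_sdiff_add_card_inter X B C
  have := hd hB hC hBC
  rw [Function.onFun, disjoint_iff_inter_eq_empty, ← sdiff_union_distrib, ← card_eq_zero]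
  omega

lemma filter_erase_notMem_farSets (hX : X ∈ farSets 𝓑 (n + 1) r) :
    {y ∈ X | X.erase y ∉ farSets 𝓑 n r} = {B ∈ 𝓑 | #(X \ B) = r}.biUnion fun B => X \ B := by
  obtain ⟨hXn, hXr⟩ := mem_farSets.mp hX
  ext y
  simp only [mem_filter, mem_biUnion, mem_sdiff]
  constructor
  · rintro ⟨hy, hfar⟩
    simp only [mem_farSets, card_erase_of_mem hy, hXn, add_tsub_cancel_right, true_and] at hfar
    push Not at hfar
    obtain ⟨B, hB, hlt⟩ := hfar
    have hXB := hXr B hB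
    rw [erase_sdiff_comm] at hlt
    have hyB : y ∈ X \ B := by
      by_contra hyB
      rw [erase_eq_of_notMem hyB] at hlt
      omega
    rw [card_erase_of_mem hyB] at hlt
    exact ⟨B, ⟨hB, by omega⟩, mem_sdiff.mp hyB⟩
  · rintro ⟨B, ⟨hB, hXB⟩, hy, hyB⟩
    refine ⟨hy, fun hfar => ?_⟩
    have hle := (mem_farSets.mp hfar).2 B hB
    rw [erase_sdiff_comm] at hle
    have := card_erase_lt_of_mem (mem_sdiff.mpr ⟨hy, hyB⟩)
    omega

lemma card_filter_erase_mem_farSets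
    (hd : (𝓑 : Set (Finset α)).Pairwise fun B C => #(B ∩ C) ≤ d) (hn : d + 2 * r ≤ n + 1)
    (hX : X ∈ farSets 𝓑 (n + 1) r) :
    #{y ∈ X | X.erase y ∈ farSets 𝓑 n r} + r * missCount 𝓑 r X = n + 1 := by
  have hXn := (mem_farSets.mp hX).1
  have hdisj : (({B ∈ 𝓑 | #(X \ B) = r} : Finset (Finset α)) : Set (Finset α)).PairwiseDisjoint
      fun B => X \ B := by
    rw [coe_filter]
    exact pairwiseDisjoint_sdiff hd (hXn.symm ▸ hn)
  have hcard : #{y ∈ X | X.erase y ∉ farSets 𝓑 n r} = r * missCount 𝓑 r X := by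
    rw [filter_erase_notMem_farSets hX, card_biUnion hdisj,
      sum_congr rfl fun B hB => (mem_filter.mp hB).2, sum_const, smul_eq_mul, mul_comm, missCount]
  rw [← hcard, card_filter_add_card_filter_not, hXn]

lemma insert_mem_farSets {y : α} (hX : X ∈ farSets 𝓑 n r) (hy : y ∉ X) :
    insert y X ∈ farSets 𝓑 (n + 1) r := by
  obtain ⟨hXn, hXr⟩ := mem_farSets.mp hX
  refine mem_farSets.mpr ⟨by rw [card_insert_of_notMem hy, hXn], fun B hB => (hXr B hB).trans ?_⟩
  exact card_le_card (sdiff_subset_sdiff (subset_insert y X) Subset.rfl)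

lemma sum_card_filter_erase_mem_farSets (𝓑 : Finset (Finset α)) (n r : ℕ) :
    ∑ X ∈ farSets 𝓑 (n + 1) r, #{y ∈ X | X.erase y ∈ farSets 𝓑 n r} =
      #(farSets 𝓑 n r) * (Fintype.card α - n) := by
  have hcompl : ∑ X ∈ farSets 𝓑 n r, #Xᶜ = #(farSets 𝓑 n r) * (Fintype.card α - n) :=
    sum_const_nat fun X hX => by rw [card_compl, (mem_farSets.mp hX).1]
  rw [← hcompl, ← card_sigma, ← card_sigma]
  refine card_nbij' (fun P => ⟨P.1.erase P.2, P.2⟩) (fun P => ⟨insert P.2 P.1, P.2⟩) ?_ ?_ ?_ ?_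
  · rintro ⟨X, y⟩ hP
    simp_all
  · rintro ⟨X, y⟩ hP
    simp_all [insert_mem_farSets]
  · rintro ⟨X, y⟩ hP
    simp_all
  · rintro ⟨X, y⟩ hP
    simp_all

lemma succ_mul_card_farSets_succ (hd : (𝓑 : Set (Finset α)).Pairwise fun B C => #(B ∩ C) ≤ d)
    (hpr : d + r ≤ p) (hn : p + r = n + 1) :
    ((n : ℝ) + 1) * #(farSets 𝓑 (n + 1) r) =
      (Fintype.card α - n) * #(farSets 𝓑 n r) + r * flagCount 𝓑 p r := by
  have hcount : #(farSets 𝓑 (n + 1) r) * (n + 1) =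
      #(farSets 𝓑 n r) * (Fintype.card α - n) + r * flagCount 𝓑 p r := by
    rw [← sum_card_filter_erase_mem_farSets, ← sum_missCount_farSets hd hpr, hn, mul_sum,
      ← sum_add_distrib]
    exact (sum_const_nat fun X hX => card_filter_erase_mem_farSets hd (by omega) hX).symm
  have hcast : (#(farSets 𝓑 n r) : ℝ) * (Fintype.card α - n : ℕ) =
      #(farSets 𝓑 n r) * (Fintype.card α - n) := by
    rcases (farSets 𝓑 n r).eq_empty_or_nonempty with hempty | ⟨X, hX⟩
    · simp [hempty]
    · rw [Nat.cast_sub ((mem_farSets.mp hX).1 ▸ card_le_univ X)]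
  have hreal := congrArg (Nat.cast : ℕ → ℝ) hcount
  push_cast at hreal
  linear_combination hreal + hcast

lemma card_farSets_eq_add_flagCount
    (hd : (𝓑 : Set (Finset α)).Pairwise fun B C => #(B ∩ C) ≤ d) (hpr : d + r < p) :
    #(farSets 𝓑 (p + r) r) = #(farSets 𝓑 (p + r) (r + 1)) + flagCount 𝓑 p r := by
  have hfar : farSets 𝓑 (p + r) (r + 1) =
      {X ∈ farSets 𝓑 (p + r) r | ∀ B ∈ 𝓑, r + 1 ≤ #(X \ B)} := by
    ext X
    simp only [mem_filter, mem_farSets]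
    grind
  rw [← sum_missCount_farSets hd hpr.le, hfar, card_filter, card_eq_sum_ones, ← sum_add_distrib]
  refine sum_congr rfl fun X hX => ?_
  obtain ⟨hXn, hXr⟩ := mem_farSets.mp hX
  have hle : missCount 𝓑 r X ≤ 1 := by
    refine card_le_one.mpr fun B hB C hC => by_contra fun hBC => ?_
    obtain ⟨hB, hXB⟩ := mem_filter.mp hB
    obtain ⟨hC, hXC⟩ := mem_filter.mp hC
    have := card_sdiff_add_card_sdiff_add_card_inter X B C
    have := hd hB hC hBC
    omega
  have hzero : missCount 𝓑 r X = 0 ↔ ∀ B ∈ 𝓑, r + 1 ≤ #(X \ B) := by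
    rw [missCount, card_eq_zero, filter_eq_empty_iff]
    exact forall₂_congr fun B hB => by have := hXr B hB; omega
  split_ifs with hfar <;> rw [← hzero] at hfar <;> omega

lemma card_filter_farSets_card_sdiff_eq_of_ne
    (hd : (𝓑 : Set (Finset α)).Pairwise fun B C => #(B ∩ C) ≤ d) (hk : ∀ B ∈ 𝓑, #B = k)
    {B C : Finset α} (hB : B ∈ 𝓑) (hC : C ∈ 𝓑) (hBC : B ≠ C) :
    #{X ∈ farSets 𝓑 (d + r + r) r | #(X \ B) = r ∧ #(X \ C) = r} =
      if #(B ∩ C) = d then (k - d).choose r ^ 2 else 0 := by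
  split_ifs with hd'
  · have hBk : #(B \ C) = k - d := by rw [card_sdiff, inter_comm, hd', hk B hB]
    have hCk : #(C \ B) = k - d := by rw [card_sdiff, hd', hk C hC]
    rw [sq]
    nth_rewrite 1 [← hBk]
    rw [← hCk, ← card_filter_card_sdiff_card_sdiff, hd']
    congr 1
    ext X
    simp only [mem_filter, mem_univ, true_and]
    constructor
    · rintro ⟨hX, hXB, hXC⟩
      exact ⟨(mem_farSets.mp hX).1, hXC, hXB⟩
    · rintro ⟨hX, hXC, hXB⟩
      exact ⟨hX ▸ mem_farSets_of_card_sdiff_eq hd (by omega) hB hXB, hXB, hXC⟩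
  · rw [card_eq_zero, filter_eq_empty_iff]
    rintro X hX ⟨hXB, hXC⟩
    have := (mem_farSets.mp hX).1
    have := card_sdiff_add_card_sdiff_add_card_inter X B C
    have := hd hB hC hBC
    omega

lemma sum_missCount_sq_farSets (hd : (𝓑 : Set (Finset α)).Pairwise fun B C => #(B ∩ C) ≤ d)
    (hk : ∀ B ∈ 𝓑, #B = k) :
    ∑ X ∈ farSets 𝓑 (d + r + r) r, missCount 𝓑 r X ^ 2 =
      flagCount 𝓑 (d + r) r + #(meetingPairs 𝓑 d) * (k - d).choose r ^ 2 := by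
  have hsq (X : Finset α) :
      missCount 𝓑 r X ^ 2 = #{P ∈ 𝓑 ×ˢ 𝓑 | #(X \ P.1) = r ∧ #(X \ P.2) = r} := by
    rw [missCount, sq, ← card_product, ← filter_product]
  have hdiag : ∑ P ∈ 𝓑.diag,
      #{X ∈ farSets 𝓑 (d + r + r) r | #(X \ P.1) = r ∧ #(X \ P.2) = r} =
        flagCount 𝓑 (d + r) r := by
    rw [sum_diag]
    refine sum_congr rfl fun B hB => ?_
    rw [← filter_farSets_card_sdiff_eq hd le_rfl hB]
    simp only [and_self]
  have hoffDiag : ∑ P ∈ 𝓑.offDiag,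
      #{X ∈ farSets 𝓑 (d + r + r) r | #(X \ P.1) = r ∧ #(X \ P.2) = r} =
        #(meetingPairs 𝓑 d) * (k - d).choose r ^ 2 := by
    rw [meetingPairs, ← smul_eq_mul, ← sum_const, sum_filter]
    refine sum_congr rfl fun P hP => ?_
    obtain ⟨hB, hC, hBC⟩ := mem_offDiag.mp hP
    exact card_filter_farSets_card_sdiff_eq_of_ne hd hk hB hC hBC
  calc ∑ X ∈ farSets 𝓑 (d + r + r) r, missCount 𝓑 r X ^ 2
      = ∑ P ∈ 𝓑 ×ˢ 𝓑, #{X ∈ farSets 𝓑 (d + r + r) r | #(X \ P.1) = r ∧ #(X \ P.2) = r} := by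
        simp only [hsq]
        exact sum_card_bipartiteAbove_eq_sum_card_bipartiteBelow
          fun (X : Finset α) (P : Finset α × Finset α) => #(X \ P.1) = r ∧ #(X \ P.2) = r
    _ = _ := by rw [← diag_union_offDiag, sum_union (disjoint_diag_offDiag 𝓑), hdiag, hoffDiag]

end FarSets

section UniformFamilies

lemma cast_choose_succ_mul (n a : ℕ) :
    (n.choose (a + 1) : ℝ) * (a + 1) = n.choose a * (n - a) := by
  rcases le_or_gt a n with han | hna
  · have habsorb := congrArg (Nat.cast : ℕ → ℝ) (Nat.choose_succ_right_eq n a)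
    push_cast [Nat.cast_sub han] at habsorb
    exact habsorb
  · simp [Nat.choose_eq_zero_of_lt hna, Nat.choose_eq_zero_of_lt (Nat.lt_succ_of_lt hna)]

variable {𝓑 : Finset (Finset α)} {k x : ℕ}

lemma flagCount_eq (hk : ∀ B ∈ 𝓑, #B = k) (hx : Fintype.card α = k + x) (p r : ℕ) :
    flagCount 𝓑 p r = #𝓑 * (k.choose p * x.choose r) := by
  refine sum_const_nat fun B hB => ?_
  rw [card_filter_card_inter_card_sdiff, card_compl, hk B hB, hx, Nat.add_sub_cancel_left]

lemma flagCount_succ_left (hk : ∀ B ∈ 𝓑, #B = k) (hx : Fintype.card α = k + x) (p r : ℕ) :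
    ((p : ℝ) + 1) * flagCount 𝓑 (p + 1) r = (k - p) * flagCount 𝓑 p r := by
  rw [flagCount_eq hk hx, flagCount_eq hk hx]
  push_cast
  linear_combination (#𝓑 : ℝ) * x.choose r * cast_choose_succ_mul k p

lemma flagCount_succ_right (hk : ∀ B ∈ 𝓑, #B = k) (hx : Fintype.card α = k + x) (p r : ℕ) :
    ((r : ℝ) + 1) * flagCount 𝓑 p (r + 1) = (x - r) * flagCount 𝓑 p r := by
  rw [flagCount_eq hk hx, flagCount_eq hk hx]
  push_cast
  linear_combination (#𝓑 : ℝ) * k.choose p * cast_choose_succ_mul x r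

end UniformFamilies

lemma S2_eq_farSets (𝓑 : Finset (Finset α)) (d i : ℕ) :
    S2 𝓑 d i = farSets 𝓑 (d + (i + 1) + (i + 1)) (i + 1) := by
  ext X
  simp only [S2, mem_filter, mem_univ, true_and, mem_farSets]
  rw [show d + (i + 1) + (i + 1) = d + 2 * (i + 1) by ring]
  refine and_congr_right fun hX => forall₂_congr fun B _ => ?_
  have := card_sdiff_add_card_inter X B
  omega

lemma card_filter_card_inter_eq_missCount {𝓑 : Finset (Finset α)} {d i : ℕ} {X : Finset α}
    (hX : X ∈ S2 𝓑 d i) : #{B ∈ 𝓑 | #(X ∩ B) = d + i + 1} = missCount 𝓑 (i + 1) X := by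
  have hXcard := (mem_filter.mp hX).2.1
  refine congrArg card (filter_congr fun B _ => ?_)
  have := card_sdiff_add_card_inter X B
  omega

lemma exists_card_filter_eq_iff (𝓑 : Finset (Finset α)) (d i : ℕ) :
    (∃ m, ∀ X ∈ S2 𝓑 d i, #{B ∈ 𝓑 | #(X ∩ B) = d + i + 1} = m) ↔
      ∀ X ∈ S2 𝓑 d i, ∀ Y ∈ S2 𝓑 d i,
        (missCount 𝓑 (i + 1) X : ℝ) = missCount 𝓑 (i + 1) Y := by
  simp only [Nat.cast_inj]
  constructor
  · rintro ⟨m, hm⟩ X hX Y hY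
    rw [← card_filter_card_inter_eq_missCount hX, ← card_filter_card_inter_eq_missCount hY,
      hm X hX, hm Y hY]
  · intro hconst
    obtain ⟨m, hm⟩ := (Set.pairwise_eq_iff_exists_eq (S2 𝓑 d i : Set (Finset α)) _).mp
      fun X hX Y hY _ => hconst X hX Y hY
    exact ⟨m, fun X hX => (card_filter_card_inter_eq_missCount hX).trans (hm X hX)⟩

namespace IsBetaDesign

variable {𝓑 : Finset (Finset α)} {X : Finset α} {v k d c x i : ℕ}

lemma one_le (hB : IsBetaDesign 𝓑 v k d i) : 1 ≤ i := hB.2.1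

lemma card_univ (hB : IsBetaDesign 𝓑 v k d i) : Fintype.card α = v := hB.1.1

lemma card_block (hB : IsBetaDesign 𝓑 v k d i) : ∀ B ∈ 𝓑, #B = k := hB.1.2.2.2.2.1

lemma pairwise_card_inter_le (hB : IsBetaDesign 𝓑 v k d i) :
    (𝓑 : Set (Finset α)).Pairwise fun B C => #(B ∩ C) ≤ d :=
  fun B hBmem C hCmem => hB.1.2.2.2.2.2.1 B hBmem C hCmem

lemma farSets_pred_eq_empty (hB : IsBetaDesign 𝓑 v k d i) :
    farSets 𝓑 (d + 2 * i - 1) i = ∅ := by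
  refine eq_empty_of_forall_notMem fun X hX => ?_
  obtain ⟨hXcard, hfar⟩ := mem_farSets.mp hX
  obtain ⟨B, ⟨hBmem, hXB⟩, -⟩ := hB.2.2.2 X hXcard
  have := hfar B hBmem
  have := card_sdiff_add_card_inter X B
  have := hB.one_le
  omega

lemma mul_missCount (hB : IsBetaDesign 𝓑 v k d i) (hX : X ∈ farSets 𝓑 (d + i + i) i) :
    i * missCount 𝓑 i X = d + 2 * i := by
  have hi := hB.one_le
  have hn : d + i + i = d + 2 * i - 1 + 1 := by omega
  have herase := card_filter_erase_mem_farSets hB.pairwise_card_inter_le (by omega) (hn ▸ hX)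
  simp only [hB.farSets_pred_eq_empty, notMem_empty, filter_false, card_empty] at herase
  omega

lemma mul_flagCount (hB : IsBetaDesign 𝓑 v k d i) :
    i * flagCount 𝓑 (d + i) i = (d + 2 * i) * #(farSets 𝓑 (d + i + i) i) := by
  rw [← sum_missCount_farSets hB.pairwise_card_inter_le le_rfl, mul_sum,
    sum_congr rfl fun X hX => hB.mul_missCount hX, sum_const, smul_eq_mul, mul_comm]

/-- As `missCount 𝓑 i` is constant on these far sets, its second moment is a multiple of its
first. -/
lemma mul_card_meetingPairs (hB : IsBetaDesign 𝓑 v k d i) :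
    i * (#(meetingPairs 𝓑 d) * (k - d).choose i ^ 2) = (d + i) * flagCount 𝓑 (d + i) i := by
  have hmoments : i * ∑ X ∈ farSets 𝓑 (d + i + i) i, missCount 𝓑 i X ^ 2 =
      (d + 2 * i) * ∑ X ∈ farSets 𝓑 (d + i + i) i, missCount 𝓑 i X := by
    rw [mul_sum, mul_sum]
    refine sum_congr rfl fun X hX => ?_
    rw [sq, ← mul_assoc, hB.mul_missCount hX]
  rw [sum_missCount_sq_farSets hB.pairwise_card_inter_le hB.card_block,
    sum_missCount_farSets hB.pairwise_card_inter_le le_rfl] at hmoments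
  linarith

lemma flagCount_succ_left_eq (hB : IsBetaDesign 𝓑 (d + c + x) (d + c) d i) :
    ((d : ℝ) + i + 1) * flagCount 𝓑 (d + i + 1) i = (c - i) * flagCount 𝓑 (d + i) i := by
  have habsorb := flagCount_succ_left hB.card_block hB.card_univ (d + i) i
  push_cast at habsorb
  linear_combination habsorb

/-- The factor on the right is `i * v - (d + 2 * i) * (k - d)`. -/
lemma card_farSets_middle (hB : IsBetaDesign 𝓑 (d + c + x) (d + c) d i) :
    ((d : ℝ) + 2 * i) * (d + 2 * i + 1) * #(farSets 𝓑 (d + i + 1 + i) (i + 1)) =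
      (i * (d + c + x) - (d + 2 * i) * c) * flagCount 𝓑 (d + i) i := by
  have hfirst := congrArg (Nat.cast : ℕ → ℝ) hB.mul_flagCount
  have hstep := succ_mul_card_farSets_succ (n := d + i + i) (p := d + i + 1) (r := i)
    hB.pairwise_card_inter_le (by omega) (by omega)
  have hsplit := congrArg (Nat.cast : ℕ → ℝ) (card_farSets_eq_add_flagCount (p := d + i + 1)
    (r := i) hB.pairwise_card_inter_le (by omega))
  rw [show d + i + i + 1 = d + i + 1 + i by ring, hB.card_univ] at hstep
  push_cast at hfirst hstep hsplit
  linear_combination ((d : ℝ) + 2 * i) * hstep - (d + 2 * i) * (d + 2 * i + 1) * hsplit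
    - (c + x - 2 * i) * hfirst - (d + 2 * i) * hB.flagCount_succ_left_eq

lemma flagCount_succ_succ_eq (hB : IsBetaDesign 𝓑 (d + c + x) (d + c) d i) :
    (flagCount 𝓑 (d + (i + 1)) (i + 1) : ℝ) =
      (x - i) * (c - i) / ((i + 1) * (d + i + 1)) * flagCount 𝓑 (d + i) i := by
  have habsorb := flagCount_succ_right hB.card_block hB.card_univ (d + i + 1) i
  rw [← add_assoc]
  field_simp
  linear_combination ((d : ℝ) + i + 1) * habsorb + (x - i) * hB.flagCount_succ_left_eq

lemma card_S2_eq (hB : IsBetaDesign 𝓑 (d + c + x) (d + c) d i) :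
    (#(S2 𝓑 d i) : ℝ) =
      ((c + x - 2 * i - 1) * (i * (d + c + x) - (d + 2 * i) * c) /
          ((d + 2 * i) * (d + 2 * i + 1)) + (x - i) * (c - i) / (d + i + 1)) /
        (d + 2 * i + 2) * flagCount 𝓑 (d + i) i := by
  have hi : (0 : ℝ) < i := by exact_mod_cast hB.one_le
  have hmiddle : (#(farSets 𝓑 (d + i + 1 + i) (i + 1)) : ℝ) =
      (i * (d + c + x) - (d + 2 * i) * c) * flagCount 𝓑 (d + i) i /
        ((d + 2 * i) * (d + 2 * i + 1)) := by
    rw [eq_div_iff (by positivity)]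
    linear_combination hB.card_farSets_middle
  have hstep := succ_mul_card_farSets_succ (n := d + i + 1 + i) (p := d + (i + 1)) (r := i + 1)
    hB.pairwise_card_inter_le (by omega) (by omega)
  rw [show d + i + 1 + i + 1 = d + (i + 1) + (i + 1) by ring, ← S2_eq_farSets, hmiddle,
    hB.flagCount_succ_succ_eq, hB.card_univ] at hstep
  push_cast at hstep
  field_simp at hstep ⊢
  linear_combination hstep

lemma sum_missCount_S2 (hB : IsBetaDesign 𝓑 (d + c + x) (d + c) d i) :
    ∑ X ∈ S2 𝓑 d i, (missCount 𝓑 (i + 1) X : ℝ) =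
      (x - i) * (c - i) / ((i + 1) * (d + i + 1)) * flagCount 𝓑 (d + i) i := by
  rw [← hB.flagCount_succ_succ_eq, ← sum_missCount_farSets hB.pairwise_card_inter_le le_rfl,
    S2_eq_farSets, Nat.cast_sum]

lemma sum_missCount_sq_S2 (hB : IsBetaDesign 𝓑 (d + c + x) (d + c) d i) :
    ∑ X ∈ S2 𝓑 d i, (missCount 𝓑 (i + 1) X : ℝ) ^ 2 =
      ((x - i) * (c - i) / ((i + 1) * (d + i + 1)) +
        (c - i) ^ 2 * (d + i) / (i * (i + 1) ^ 2)) * flagCount 𝓑 (d + i) i := by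
  have hi : (0 : ℝ) < i := by exact_mod_cast hB.one_le
  have hpairs := congrArg (Nat.cast : ℕ → ℝ) hB.mul_card_meetingPairs
  have hmoment := congrArg (Nat.cast : ℕ → ℝ) (sum_missCount_sq_farSets (r := i + 1)
    hB.pairwise_card_inter_le hB.card_block)
  have habsorb := congrArg (· ^ 2) (cast_choose_succ_mul c i)
  rw [Nat.add_sub_cancel_left] at hpairs hmoment
  push_cast at hpairs hmoment
  have hoffDiag : (#(meetingPairs 𝓑 d) : ℝ) * c.choose (i + 1) ^ 2 =
      (c - i) ^ 2 * (d + i) / (i * (i + 1) ^ 2) * flagCount 𝓑 (d + i) i := by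
    field_simp
    linear_combination (#(meetingPairs 𝓑 d) : ℝ) * i * habsorb + ((c : ℝ) - i) ^ 2 * hpairs
  rw [S2_eq_farSets, hmoment, hoffDiag, hB.flagCount_succ_succ_eq, ← add_mul]

theorem card_mul_sum_missCount_sq_sub_sq_sum (hB : IsBetaDesign 𝓑 (d + c + x) (d + c) d i) :
    #(S2 𝓑 d i) * ∑ X ∈ S2 𝓑 d i, (missCount 𝓑 (i + 1) X : ℝ) ^ 2 -
        (∑ X ∈ S2 𝓑 d i, (missCount 𝓑 (i + 1) X : ℝ)) ^ 2 =
      (c - i) * (i * (d + c + x) - (d + 2 * i) * c) * flagCount 𝓑 (d + i) i ^ 2 /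
        (i * (i + 1) ^ 2 * (d + i + 1) * (d + 2 * i) * (d + 2 * i + 1) * (d + 2 * i + 2)) *
          hPoly x d c i := by
  have hi : (0 : ℝ) < i := by exact_mod_cast hB.one_le
  rw [hB.card_S2_eq, hB.sum_missCount_S2, hB.sum_missCount_sq_S2, hPoly]
  field_simp
  ring

lemma flagCount_pos (hB : IsBetaDesign 𝓑 (d + c + x) (d + c) d i) (hic : i ≤ c) (hix : i ≤ x) :
    0 < flagCount 𝓑 (d + i) i := by
  have hblocks : 0 < #𝓑 := zero_lt_two.trans_le hB.1.2.1
  rw [flagCount_eq hB.card_block hB.card_univ]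
  exact mul_pos hblocks (mul_pos (Nat.choose_pos (by omega)) (Nat.choose_pos hix))

lemma exists_pos_mul_hPoly_eq (hB : IsBetaDesign 𝓑 (d + c + x) (d + c) d i) (hic : i < c)
    (hlb : (d + 2 * i) * c < i * (d + c + x)) :
    ∃ K : ℝ, 0 < K ∧ K * hPoly x d c i =
      #(S2 𝓑 d i) * ∑ X ∈ S2 𝓑 d i, (missCount 𝓑 (i + 1) X : ℝ) ^ 2 -
        (∑ X ∈ S2 𝓑 d i, (missCount 𝓑 (i + 1) X : ℝ)) ^ 2 := by
  -- `hlb` reads `d * (c - i) + i * c < i * x`.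
  have hcx : c < x := by nlinarith
  have hi : (0 : ℝ) < i := by exact_mod_cast hB.one_le
  have hflag : (0 : ℝ) < flagCount 𝓑 (d + i) i := by
    exact_mod_cast hB.flagCount_pos hic.le (hic.trans hcx).le
  have hci : (0 : ℝ) < c - i := sub_pos.mpr (by exact_mod_cast hic)
  have hbound : (0 : ℝ) < i * (d + c + x) - (d + 2 * i) * c := sub_pos.mpr (by exact_mod_cast hlb)
  exact ⟨_, by positivity, hB.card_mul_sum_missCount_sq_sub_sq_sum.symm⟩

end IsBetaDesign

/-- **Proposition 7.** Let `𝓑` be a `β(i)` design with parameter `(v, k, d)`, `c = k - d`,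
`k - d ≥ i + 1`, and suppose `v` does not achieve the lower bound `(d + 2i)(k-d)/i`.
Then `h(v-k, d, c, i) ≥ 0`, with equality if and only if the number of blocks `B` with
`|X ∩ B| = d + i + 1` does not depend on the choice of `X ∈ S₂`. -/
theorem prop7 (𝓑 : Finset (Finset α)) (v k d i c : ℕ)
    (hB : IsBetaDesign 𝓑 v k d i) (hkd : i + 1 ≤ k - d) (hc : c = k - d)
    (hlb : (d + 2 * i) * (k - d) < i * v) :
    0 ≤ hPoly ((v : ℝ) - (k : ℝ)) (d : ℝ) (c : ℝ) (i : ℝ) ∧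
    (hPoly ((v : ℝ) - (k : ℝ)) (d : ℝ) (c : ℝ) (i : ℝ) = 0 ↔
      ∃ m : ℕ, ∀ X ∈ S2 𝓑 d i,
        (𝓑.filter (fun B => (X ∩ B).card = d + i + 1)).card = m) := by
  obtain ⟨x, rfl⟩ := Nat.exists_eq_add_of_le hB.1.2.2.2.1.le
  obtain rfl : k = d + c := by omega
  rw [← hc] at hkd hlb
  obtain ⟨K, hK, hvariance⟩ := hB.exists_pos_mul_hPoly_eq hkd hlb
  rw [Nat.cast_add (d + c) x, add_sub_cancel_left]
  constructor
  · refine nonneg_of_mul_nonneg_right ?_ hK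
    rw [hvariance]
    exact sub_nonneg.mpr sq_sum_le_card_mul_sum_sq
  · rw [exists_card_filter_eq_iff, ← card_mul_sum_sq_eq_sq_sum_iff,
      ← sub_eq_zero (b := (∑ X ∈ S2 𝓑 d i, (missCount 𝓑 (i + 1) X : ℝ)) ^ 2), ← hvariance,
      mul_eq_zero_iff_left hK.ne']
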